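/- Let Φ, Φ̃ : ℂⁿ → ℝ be strictly plurisubharmonic quadratic forms with Φ̃ ≤ Φ pointwise, and let κ♭ : ℂⁿ → ℂⁿ be an ℝ-linear isomorphism satisfying κ♭(Rad(Φ − Φ̃)) = Rad(Φ − Φ̃). Let ã ∈ ℂ and let Ψ̃ be a holomorphic quadratic form on ℂ^{2n} such that for some c > 0, 2 Re Ψ̃(z, w̄) − Φ(z) − Φ̃(w) ≤ −c|z − (κ♭)^{-1}(w)|² for all z, w ∈ ℂⁿ. Let v be an entire function with |v(w)| ≤ C₀⟨w⟩^{N} e^{Φ̃(w)} on ℂⁿ for some C₀ > 0, N ∈ ℝ, and set G̃ v(z) = ã ∫_{ℂⁿ} e^{2Ψ̃(z,w̄)} v(w) e^{-2Φ̃(w)} dL(w). Then WF^{1/2}_Φ(G̃v) ∩ Rad(Φ − Φ̃) ⊆ (κ♭)^{-1}(WF^{1/2}_Φ(v)) ∩ Rad(Φ − Φ̃). -/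

import Mathlib

open Matrix MeasureTheory ENNReal

noncomputable section

/-- The squared Euclidean norm `|z|²` on `ℂⁿ`. -/
def eSq {n : ℕ} (z : Fin n → ℂ) : ℝ := ∑ i, Complex.normSq (z i)

/-- The Japanese bracket `⟨z⟩ = (1 + |z|²)^{1/2}`. -/
def jb {n : ℕ} (z : Fin n → ℂ) : ℝ := Real.sqrt (1 + eSq z)

/-- `Φ : ℂⁿ → ℝ` is a (real) quadratic form of the underlying real coordinates. -/
def IsRQuad {n : ℕ} (Φ : (Fin n → ℂ) → ℝ) : Prop :=
  ∃ B : (Fin n → ℂ) →ₗ[ℝ] (Fin n → ℂ) →ₗ[ℝ] ℝ, ∀ z, Φ z = B z z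

/-- `Φ : ℂⁿ → ℝ` is a strictly plurisubharmonic quadratic form.  For a quadratic form `Φ`,
the Levi form satisfies `(∂²_{z z̄}Φ) w ⋅ w̄ = (Φ(w) + Φ(i w))/2`, so positive definiteness of
the Levi matrix is equivalent to `Φ(w) + Φ(i·w) > 0` for all `w ≠ 0`. -/
def IsSPSH {n : ℕ} (Φ : (Fin n → ℂ) → ℝ) : Prop :=
  IsRQuad Φ ∧ ∀ z : Fin n → ℂ, z ≠ 0 → 0 < Φ z + Φ (Complex.I • z)

/-- The squared weighted norm `‖u‖_s² = ∫ |u(z)|² ⟨z⟩^{2s} e^{-2Φ(z)} L(dz)` (in `ℝ≥0∞`). -/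
def hnorm {n : ℕ} (Φ : (Fin n → ℂ) → ℝ) (s : ℝ) (u : (Fin n → ℂ) → ℂ) : ℝ≥0∞ :=
  ∫⁻ z : Fin n → ℂ, (‖u z‖₊ : ℝ≥0∞) ^ 2 * ENNReal.ofReal (jb z ^ (2 * s) * Real.exp (-2 * Φ z))

/-- A conic subset of `ℂⁿ`. -/
def IsConic {n : ℕ} (V : Set (Fin n → ℂ)) : Prop := ∀ z ∈ V, ∀ t : ℝ, 0 < t → t • z ∈ V

/-- The `1/2`-Gelfand–Shilov wavefront set of `u` relative to `Φ`: the complement in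
`ℂⁿ∖{0}` of the points having an open conic neighborhood in `ℂⁿ∖{0}` on which
`|u(z)| ≤ C e^{Φ(z) - c|z|²}`. -/
def wf {n : ℕ} (Φ : (Fin n → ℂ) → ℝ) (u : (Fin n → ℂ) → ℂ) : Set (Fin n → ℂ) :=
  {z₀ | z₀ ≠ 0 ∧ ¬ ∃ V : Set (Fin n → ℂ), IsOpen V ∧ IsConic V ∧ (0 : Fin n → ℂ) ∉ V ∧ z₀ ∈ V ∧
      ∃ C c : ℝ, 0 < C ∧ 0 < c ∧ ∀ z ∈ V, ‖u z‖ ≤ C * Real.exp (Φ z - c * eSq z)}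

/-- A holomorphic quadratic form on `ℂ^{2n} = ℂⁿ_z × ℂⁿ_θ`. -/
def IsCQuad2 {n : ℕ} (Ψ : (Fin n → ℂ) → (Fin n → ℂ) → ℂ) : Prop :=
  ∃ B : ((Fin n → ℂ) × (Fin n → ℂ)) →ₗ[ℂ] ((Fin n → ℂ) × (Fin n → ℂ)) →ₗ[ℂ] ℂ,
    ∀ z θ, Ψ z θ = B (z, θ) (z, θ)

/-- A real quadratic form on `ℂⁿ × ℂⁿ` viewed as a real vector space. -/
def IsRQuadPair {n : ℕ} (R : (Fin n → ℂ) → (Fin n → ℂ) → ℝ) : Prop :=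
  ∃ B : ((Fin n → ℂ) × (Fin n → ℂ)) →ₗ[ℝ] ((Fin n → ℂ) × (Fin n → ℂ)) →ₗ[ℝ] ℝ,
    ∀ z w, R z w = B (z, w) (z, w)

/-- The Bergman-form integral operator
`G u (z) = a ∫ e^{2Ψ(z, w̄)} u(w) e^{-2Φ(w)} L(dw)`. -/
def berg {n : ℕ} (a : ℂ) (Ψ : (Fin n → ℂ) → (Fin n → ℂ) → ℂ) (Φ : (Fin n → ℂ) → ℝ)
    (u : (Fin n → ℂ) → ℂ) (z : Fin n → ℂ) : ℂ :=
  a * ∫ w : Fin n → ℂ, Complex.exp (2 * Ψ z (star w)) * u w * (Real.exp (-2 * Φ w) : ℂ)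

/-!
The factor `e^{-c|z - κ⁻¹w|²}` in the kernel confines the integral over `w` to a conic neighbourhood
of the ray through `κ z`. For `w` off such a neighbourhood, `|z - κ⁻¹w|²` dominates `|z|² + |w|²`,
which absorbs the moderate growth of `v`; for `w` inside it, the decay of `v` dominates `|w|²`, and
`|z - κ⁻¹w|² + |w|²` is positive definite on `ℂⁿ × ℂⁿ`. Hence `κ` maps `WF_Φ(Gv)` into `WF_Φ̃(v)`,
for arbitrary weights. On the radical of `Φ - Φ̃` the two weights agree to within `ε|z|²` in a small
cone, so there the wavefront sets relative to `Φ` and `Φ̃` coincide.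
-/

/-- Continuous functions on a real normed space that are positively homogeneous of degree two; this
is the only feature of the quadratic weights that the wavefront set sees. -/
structure IsSqHomogeneous {E : Type*} [NormedAddCommGroup E] [NormedSpace ℝ E] (q : E → ℝ) :
    Prop where
  continuous : Continuous q
  map_pos_smul : ∀ ⦃t : ℝ⦄, 0 < t → ∀ x, q (t • x) = t ^ 2 * q x

namespace IsSqHomogeneous

variable {E F : Type*} [NormedAddCommGroup E] [NormedSpace ℝ E] [NormedAddCommGroup F]
  [NormedSpace ℝ F] {p q : E → ℝ}

theorem map_zero (hq : IsSqHomogeneous q) : q 0 = 0 := by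
  have h := hq.map_pos_smul two_pos 0
  rw [smul_zero] at h
  linarith

theorem add (hp : IsSqHomogeneous p) (hq : IsSqHomogeneous q) :
    IsSqHomogeneous fun x => p x + q x where
  continuous := hp.continuous.add hq.continuous
  map_pos_smul t ht x := by rw [hp.map_pos_smul ht, hq.map_pos_smul ht, mul_add]

theorem comp_continuousLinearMap (hq : IsSqHomogeneous q) (L : F →L[ℝ] E) :
    IsSqHomogeneous fun x => q (L x) where
  continuous := hq.continuous.comp L.continuous
  map_pos_smul t ht x := by rw [map_smul L, hq.map_pos_smul ht]

theorem exists_pos_mul_le_of_isClosed_cone [ProperSpace E] (hp : IsSqHomogeneous p)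
    (hq : IsSqHomogeneous q) {S : Set E} (hS : IsClosed S)
    (hcone : ∀ x ∈ S, ∀ t : ℝ, 0 < t → t • x ∈ S) (hpos : ∀ x ∈ S, x ≠ 0 → 0 < q x) :
    ∃ m : ℝ, 0 < m ∧ ∀ x ∈ S, m * p x ≤ q x := by
  have hcompact : IsCompact (S ∩ Metric.sphere 0 1) := (isCompact_sphere 0 1).inter_left hS
  have hcont : ContinuousOn (fun x => p x / q x) (S ∩ Metric.sphere 0 1) :=
    hp.continuous.continuousOn.div hq.continuous.continuousOn fun x hx =>
      (hpos x hx.1 (ne_zero_of_mem_unit_sphere ⟨x, hx.2⟩)).ne'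
  obtain ⟨M, hM⟩ := hcompact.bddAbove_image hcont
  have hM' : 0 < max M 1 := lt_max_of_lt_right one_pos
  refine ⟨(max M 1)⁻¹, inv_pos.2 hM', fun x hx => ?_⟩
  rcases eq_or_ne x 0 with rfl | hx0
  · rw [hp.map_zero, hq.map_zero, mul_zero]
  have ht : 0 < ‖x‖⁻¹ := inv_pos.2 (norm_pos_iff.2 hx0)
  have hunit : ‖x‖⁻¹ • x ∈ S ∩ Metric.sphere 0 1 :=
    ⟨hcone x hx _ ht, by simpa using norm_smul_inv_norm (𝕜 := ℝ) hx0⟩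
  have hratio : p x / q x ≤ max M 1 := by
    have h := hM (Set.mem_image_of_mem _ hunit)
    simp only [hp.map_pos_smul ht, hq.map_pos_smul ht] at h
    rw [mul_div_mul_left _ _ (pow_pos ht 2).ne'] at h
    exact h.trans (le_max_left _ _)
  rwa [inv_mul_le_iff₀ hM', ← div_le_iff₀ (hpos x hx hx0)]

end IsSqHomogeneous

open scoped Pointwise in
theorem infDist_smul_of_cone {E : Type*} [NormedAddCommGroup E] [NormedSpace ℝ E] {S : Set E}
    (hcone : ∀ x ∈ S, ∀ t : ℝ, 0 < t → t • x ∈ S) {t : ℝ} (ht : 0 < t) (x : E) :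
    Metric.infDist (t • x) S = t * Metric.infDist x S := by
  have hS : t • S = S := by
    refine Set.Subset.antisymm (Set.smul_set_subset_iff.2 fun y hy => hcone y hy t ht)
      fun y hy => ?_
    exact (Set.mem_smul_set_iff_inv_smul_mem₀ ht.ne' S y).2 (hcone y hy _ (inv_pos.2 ht))
  conv_lhs => rw [← hS]
  rw [infDist_smul₀ ht.ne', Real.norm_of_nonneg ht.le]

theorem exists_open_cone_separated {E : Type*} [NormedAddCommGroup E] [NormedSpace ℝ E] {W : Set E}
    (hW : IsOpen W) (hcone : ∀ x ∈ W, ∀ t : ℝ, 0 < t → t • x ∈ W) (h0 : (0 : E) ∉ W) {x₀ : E}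
    (hx₀ : x₀ ∈ W) :
    ∃ (U : Set E) (δ : ℝ), IsOpen U ∧ (∀ x ∈ U, ∀ t : ℝ, 0 < t → t • x ∈ U) ∧ (0 : E) ∉ U ∧
      x₀ ∈ U ∧ 0 < δ ∧ ∀ x ∈ U, ∀ y ∉ W, δ * ‖x‖ ≤ ‖x - y‖ := by
  have hcompl : ∀ x ∈ Wᶜ, ∀ t : ℝ, 0 < t → t • x ∈ Wᶜ := fun x hx t ht hmem =>
    hx (inv_smul_smul₀ ht.ne' x ▸ hcone _ hmem _ (inv_pos.2 ht))
  have hdist : 0 < Metric.infDist x₀ Wᶜ :=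
    (hW.isClosed_compl.notMem_iff_infDist_pos ⟨0, h0⟩).1 (Set.notMem_compl_iff.2 hx₀)
  have hnorm : 0 < ‖x₀‖ := norm_pos_iff.2 fun h => h0 (h ▸ hx₀)
  set δ := Metric.infDist x₀ Wᶜ / (2 * ‖x₀‖) with hδ
  refine ⟨{x | δ * ‖x‖ < Metric.infDist x Wᶜ}, δ, ?_, fun x hx t ht => ?_, ?_, ?_, by positivity,
    fun x hx y hy => ?_⟩
  · exact isOpen_lt (continuous_const.mul continuous_norm) (Metric.continuous_infDist_pt _)
  · rw [Set.mem_ofPred_eq, infDist_smul_of_cone hcompl ht, norm_smul, Real.norm_of_nonneg ht.le,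
      mul_left_comm]
    exact mul_lt_mul_of_pos_left hx ht
  · simp [Metric.infDist_zero_of_mem (show (0 : E) ∈ Wᶜ from h0)]
  · have h : δ * ‖x₀‖ = Metric.infDist x₀ Wᶜ / 2 := by rw [hδ]; field_simp
    rw [Set.mem_ofPred_eq, h]
    exact half_lt_self hdist
  · exact (le_of_lt hx).trans (dist_eq_norm x y ▸ Metric.infDist_le_dist_of_mem hy)

/-- Gaussian decay of `f` on `S`, at a rate measured by `q`, relative to the weight `e^Φ`. For
`q = |z|²` this is the bound that defines the wavefront set; other choices of `q` describe
kernels. -/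
def GaussianDecayOn {X : Type*} (q Φ : X → ℝ) (f : X → ℂ) (S : Set X) : Prop :=
  ∃ C c : ℝ, 0 < C ∧ 0 < c ∧ ∀ x ∈ S, ‖f x‖ ≤ C * Real.exp (Φ x - c * q x)

/-- Growth of `f` relative to the weight `e^Φ` that is slower than every Gaussian in `q`. -/
def SubGaussianGrowth {X : Type*} (q Φ : X → ℝ) (f : X → ℂ) : Prop :=
  ∀ ε : ℝ, 0 < ε → ∃ C : ℝ, 0 < C ∧ ∀ x, ‖f x‖ ≤ C * Real.exp (Φ x + ε * q x)

namespace GaussianDecayOn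

variable {X : Type*} {p q Φ Ψ : X → ℝ} {f g : X → ℂ} {S T : Set X}

theorem mono (h : GaussianDecayOn q Φ f T) (hST : S ⊆ T) : GaussianDecayOn q Φ f S := by
  obtain ⟨C, c, hC, hc, hf⟩ := h
  exact ⟨C, c, hC, hc, fun x hx => hf x (hST hx)⟩

theorem of_mul_le (h : GaussianDecayOn q Φ f S) {m : ℝ} (hm : 0 < m)
    (hpq : ∀ x ∈ S, m * p x ≤ q x) : GaussianDecayOn p Φ f S := by
  obtain ⟨C, c, hC, hc, hf⟩ := h
  refine ⟨C, c * m, hC, mul_pos hc hm, fun x hx => (hf x hx).trans ?_⟩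
  rw [mul_assoc]
  gcongr
  exact hpq x hx

theorem union (hS : GaussianDecayOn q Φ f S) (hT : GaussianDecayOn q Φ f T) (hq : ∀ x, 0 ≤ q x) :
    GaussianDecayOn q Φ f (S ∪ T) := by
  obtain ⟨C, c, hC, hc, hfS⟩ := hS
  obtain ⟨D, d, _, hd, hfT⟩ := hT
  refine ⟨max C D, min c d, lt_max_of_lt_left hC, lt_min hc hd, fun x hx => ?_⟩
  have hqx := hq x
  rcases hx with hx | hx
  · refine (hfS x hx).trans ?_
    gcongr
    exacts [le_max_left C D, min_le_left c d]
  · refine (hfT x hx).trans ?_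
    gcongr
    exacts [le_max_right C D, min_le_right c d]

theorem mul (hf : GaussianDecayOn p Φ f S) (hg : GaussianDecayOn q Ψ g S) (hp : ∀ x, 0 ≤ p x)
    (hq : ∀ x, 0 ≤ q x) :
    GaussianDecayOn (fun x => p x + q x) (fun x => Φ x + Ψ x) (fun x => f x * g x) S := by
  obtain ⟨C, c, hC, hc, hf⟩ := hf
  obtain ⟨D, d, hD, hd, hg⟩ := hg
  refine ⟨C * D, min c d, mul_pos hC hD, lt_min hc hd, fun x hx => ?_⟩
  have hpx : min c d * p x ≤ c * p x := mul_le_mul_of_nonneg_right (min_le_left c d) (hp x)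
  have hqx : min c d * q x ≤ d * q x := mul_le_mul_of_nonneg_right (min_le_right c d) (hq x)
  calc ‖f x * g x‖
      ≤ (C * Real.exp (Φ x - c * p x)) * (D * Real.exp (Ψ x - d * q x)) := by
        rw [norm_mul]
        exact mul_le_mul (hf x hx) (hg x hx) (norm_nonneg _) (by positivity)
    _ = C * D * Real.exp ((Φ x - c * p x) + (Ψ x - d * q x)) := by
        rw [mul_mul_mul_comm, ← Real.exp_add]
    _ ≤ C * D * Real.exp (Φ x + Ψ x - min c d * (p x + q x)) := by
        gcongr
        linarith

theorem mul_subGaussianGrowth (hf : GaussianDecayOn q Φ f S) (hg : SubGaussianGrowth q Ψ g) :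
    GaussianDecayOn q (fun x => Φ x + Ψ x) (fun x => f x * g x) S := by
  obtain ⟨C, c, hC, hc, hf⟩ := hf
  obtain ⟨D, hD, hg⟩ := hg (c / 2) (half_pos hc)
  refine ⟨C * D, c / 2, mul_pos hC hD, half_pos hc, fun x hx => ?_⟩
  calc ‖f x * g x‖
      ≤ (C * Real.exp (Φ x - c * q x)) * (D * Real.exp (Ψ x + c / 2 * q x)) := by
        rw [norm_mul]
        exact mul_le_mul (hf x hx) (hg x) (norm_nonneg _) (by positivity)
    _ = C * D * Real.exp ((Φ x - c * q x) + (Ψ x + c / 2 * q x)) := by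
        rw [mul_mul_mul_comm, ← Real.exp_add]
    _ = C * D * Real.exp (Φ x + Ψ x - c / 2 * q x) := by
        congr 2
        ring

end GaussianDecayOn

variable {n : ℕ}

theorem eSq_nonneg (z : Fin n → ℂ) : 0 ≤ eSq z :=
  Finset.sum_nonneg fun i _ => Complex.normSq_nonneg (z i)

theorem eSq_pos {z : Fin n → ℂ} (hz : z ≠ 0) : 0 < eSq z := by
  obtain ⟨i, hi⟩ := Function.ne_iff.1 hz
  exact Finset.sum_pos' (fun j _ => Complex.normSq_nonneg (z j))
    ⟨i, Finset.mem_univ i, Complex.normSq_pos.2 hi⟩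

theorem isSqHomogeneous_eSq : IsSqHomogeneous (eSq : (Fin n → ℂ) → ℝ) where
  continuous := continuous_finsetSum _ fun i _ =>
    Complex.continuous_normSq.comp (continuous_apply i)
  map_pos_smul t _ z := by
    simp only [eSq, Finset.mul_sum, Pi.smul_apply, Complex.real_smul, Complex.normSq_mul,
      Complex.normSq_ofReal, sq]

theorem IsRQuad.isSqHomogeneous {Φ : (Fin n → ℂ) → ℝ} (h : IsRQuad Φ) : IsSqHomogeneous Φ := by
  obtain ⟨B, hB⟩ := h
  obtain rfl : Φ = fun z => B.toContinuousBilinearMap z z := funext fun z => by simp [hB]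
  refine ⟨by fun_prop, fun t _ z => ?_⟩
  simp only [map_smul, _root_.smul_apply, smul_eq_mul]
  ring

theorem integrable_exp_neg_mul_eSq {b : ℝ} (hb : 0 < b) :
    Integrable fun w : Fin n → ℂ => Real.exp (-(b * eSq w)) := by
  have hone : Integrable fun w : ℂ => Real.exp (-(b * Complex.normSq w)) := by
    have h := (GaussianFourier.integrable_cexp_neg_mul_sq_norm_add (V := ℂ) (b := (b : ℂ))
      (by simpa using hb) 0 0).norm
    refine h.congr (.of_forall fun w => ?_)
    simp [Complex.norm_exp, Complex.normSq_eq_norm_sq, ← Complex.ofReal_pow]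
  refine (Integrable.fintype_prod (ι := Fin n) (𝕜 := ℝ) fun _ => hone).congr
    (.of_forall fun w => ?_)
  simp only [eSq, Finset.mul_sum, ← Finset.sum_neg_distrib, Real.exp_sum]

theorem exists_jb_rpow_le_exp (N : ℝ) {ε : ℝ} (hε : 0 < ε) :
    ∃ A : ℝ, 0 < A ∧ ∀ w : Fin n → ℂ, jb w ^ N ≤ A * Real.exp (ε * eSq w) := by
  obtain ⟨k, hk⟩ := exists_nat_ge N
  refine ⟨k.factorial / ε ^ k * Real.exp ε, by positivity, fun w => ?_⟩
  have hw := eSq_nonneg w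
  have hjb : 1 ≤ jb w := Real.one_le_sqrt.2 (by linarith)
  calc jb w ^ N
      ≤ jb w ^ (2 * k) := by
        rw [← Real.rpow_natCast]
        refine Real.rpow_le_rpow_of_exponent_le hjb ?_
        push_cast
        linarith [k.cast_nonneg (α := ℝ)]
    _ = k.factorial / ε ^ k * ((ε * (1 + eSq w)) ^ k / k.factorial) := by
        rw [pow_mul, jb, Real.sq_sqrt (by linarith), mul_pow]
        field_simp
    _ ≤ k.factorial / ε ^ k * Real.exp (ε * (1 + eSq w)) := by
        gcongr
        exact Real.pow_div_factorial_le_exp _ (by positivity) k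
    _ = k.factorial / ε ^ k * Real.exp ε * Real.exp (ε * eSq w) := by
        rw [mul_add, mul_one, Real.exp_add, mul_assoc]

theorem subGaussianGrowth_of_norm_le_jb_rpow {Φ : (Fin n → ℂ) → ℝ} {v : (Fin n → ℂ) → ℂ} {C N : ℝ}
    (hC : 0 < C) (hv : ∀ w, ‖v w‖ ≤ C * jb w ^ N * Real.exp (Φ w)) :
    SubGaussianGrowth eSq Φ v := by
  intro ε hε
  obtain ⟨A, hA, hjb⟩ := exists_jb_rpow_le_exp (n := n) N hε
  refine ⟨C * A, mul_pos hC hA, fun w => (hv w).trans ?_⟩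
  calc C * jb w ^ N * Real.exp (Φ w)
      ≤ C * (A * Real.exp (ε * eSq w)) * Real.exp (Φ w) := by
        gcongr
        exact hjb w
    _ = C * A * Real.exp (Φ w + ε * eSq w) := by rw [Real.exp_add]; ring

theorem notMem_wf_iff {Φ : (Fin n → ℂ) → ℝ} {u : (Fin n → ℂ) → ℂ} {z₀ : Fin n → ℂ} (hz₀ : z₀ ≠ 0) :
    z₀ ∉ wf Φ u ↔ ∃ V : Set (Fin n → ℂ), IsOpen V ∧ IsConic V ∧ (0 : Fin n → ℂ) ∉ V ∧ z₀ ∈ V ∧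
      GaussianDecayOn eSq Φ u V := by
  simp only [wf, GaussianDecayOn, Set.mem_ofPred_eq, not_and_not_right, hz₀, ne_eq,
    not_false_eq_true, forall_const]

theorem mem_wf_of_eq {Φ Φt : (Fin n → ℂ) → ℝ} (hΦ : IsSqHomogeneous Φ) (hΦt : IsSqHomogeneous Φt)
    {u : (Fin n → ℂ) → ℂ} {z₀ : Fin n → ℂ} (heq : Φ z₀ = Φt z₀) (hmem : z₀ ∈ wf Φt u) :
    z₀ ∈ wf Φ u := by
  have hz₀ : z₀ ≠ 0 := hmem.1
  by_contra hnot
  obtain ⟨V, hVo, hVc, h0, hzV, C, c, hC, hc, hu⟩ := (notMem_wf_iff hz₀).1 hnot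
  refine (notMem_wf_iff hz₀).2 ⟨V ∩ {z | Φ z < Φt z + c / 2 * eSq z}, ?_, ?_, fun h => h0 h.1,
    ⟨hzV, ?_⟩, C, c / 2, hC, half_pos hc, ?_⟩ hmem
  · exact hVo.inter (isOpen_lt hΦ.continuous
      (hΦt.continuous.add (continuous_const.mul isSqHomogeneous_eSq.continuous)))
  · rintro z ⟨hz, hlt⟩ t ht
    refine ⟨hVc z hz t ht, ?_⟩
    rw [Set.mem_ofPred_eq, hΦ.map_pos_smul ht, hΦt.map_pos_smul ht,
      isSqHomogeneous_eSq.map_pos_smul ht, mul_left_comm, ← mul_add]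
    exact mul_lt_mul_of_pos_left hlt (pow_pos ht 2)
  · rw [Set.mem_ofPred_eq, heq, lt_add_iff_pos_right]
    exact mul_pos (half_pos hc) (eSq_pos hz₀)
  · rintro z ⟨hz, hlt⟩
    refine (hu z hz).trans ?_
    rw [Set.mem_ofPred_eq] at hlt
    gcongr C * Real.exp ?_
    linarith

section Kernel

variable {Φ Φt : (Fin n → ℂ) → ℝ} {κ : (Fin n → ℂ) ≃L[ℝ] (Fin n → ℂ)}
  {K : (Fin n → ℂ) × (Fin n → ℂ) → ℂ} {u v : (Fin n → ℂ) → ℂ}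

theorem isSqHomogeneous_eSq_sub_symm (κ : (Fin n → ℂ) ≃L[ℝ] (Fin n → ℂ)) :
    IsSqHomogeneous fun p : (Fin n → ℂ) × (Fin n → ℂ) => eSq (p.1 - κ.symm p.2) :=
  isSqHomogeneous_eSq.comp_continuousLinearMap
    (ContinuousLinearMap.fst ℝ _ _ -
      κ.symm.toContinuousLinearMap.comp (ContinuousLinearMap.snd ℝ _ _))

theorem isSqHomogeneous_eSq_fst :
    IsSqHomogeneous fun p : (Fin n → ℂ) × (Fin n → ℂ) => eSq p.1 :=
  isSqHomogeneous_eSq.comp_continuousLinearMap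
    (ContinuousLinearMap.fst ℝ (Fin n → ℂ) (Fin n → ℂ))

theorem isSqHomogeneous_eSq_snd :
    IsSqHomogeneous fun p : (Fin n → ℂ) × (Fin n → ℂ) => eSq p.2 :=
  isSqHomogeneous_eSq.comp_continuousLinearMap
    (ContinuousLinearMap.snd ℝ (Fin n → ℂ) (Fin n → ℂ))

theorem exists_pos_mul_eSq_add_eSq_le (κ : (Fin n → ℂ) ≃L[ℝ] (Fin n → ℂ)) :
    ∃ m : ℝ, 0 < m ∧ ∀ z w, m * (eSq z + eSq w) ≤ eSq (z - κ.symm w) + eSq w := by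
  obtain ⟨m, hm, hle⟩ := (isSqHomogeneous_eSq_fst.add
    isSqHomogeneous_eSq_snd).exists_pos_mul_le_of_isClosed_cone
    ((isSqHomogeneous_eSq_sub_symm κ).add isSqHomogeneous_eSq_snd) isClosed_univ
    (fun _ _ _ _ => trivial) fun p _ hp => by
      rcases eq_or_ne p.2 0 with hw | hw
      · have hz : p.1 ≠ 0 := fun hz => hp (Prod.ext hz hw)
        simpa [hw] using add_pos_of_pos_of_nonneg (eSq_pos hz) (eSq_nonneg 0)
      · exact add_pos_of_nonneg_of_pos (eSq_nonneg _) (eSq_pos hw)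
  exact ⟨m, hm, fun z w => hle (z, w) trivial⟩

theorem exists_pos_mul_eSq_add_eSq_le_of_separated (κ : (Fin n → ℂ) ≃L[ℝ] (Fin n → ℂ)) {δ : ℝ}
    (hδ : 0 < δ) :
    ∃ m : ℝ, 0 < m ∧ ∀ z w, δ * ‖z‖ ≤ ‖z - κ.symm w‖ →
      m * (eSq z + eSq w) ≤ eSq (z - κ.symm w) := by
  have hclosed : IsClosed {p : (Fin n → ℂ) × (Fin n → ℂ) | δ * ‖p.1‖ ≤ ‖p.1 - κ.symm p.2‖} :=
    isClosed_le (by fun_prop) (by fun_prop)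
  obtain ⟨m, hm, hle⟩ := (isSqHomogeneous_eSq_fst.add
    isSqHomogeneous_eSq_snd).exists_pos_mul_le_of_isClosed_cone (isSqHomogeneous_eSq_sub_symm κ)
    hclosed
    (fun p hp t _ => by
      simp only [Set.mem_ofPred_eq, Prod.smul_fst, Prod.smul_snd, map_smul, ← smul_sub, norm_smul,
        mul_left_comm δ] at hp ⊢
      gcongr)
    fun p hp hp0 => eSq_pos fun h => hp0 <| by
      have hz : p.1 = 0 := norm_le_zero_iff.1 <|
        nonpos_of_mul_nonpos_right (by simpa [h] using hp) hδ
      have hw : p.2 = 0 := by simpa [hz] using h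
      exact Prod.ext hz hw
  exact ⟨m, hm, fun z w h => hle (z, w) h⟩

theorem gaussianDecayOn_kernel_mul_of_decay
    (hK : GaussianDecayOn (fun p => eSq (p.1 - κ.symm p.2)) (fun p => Φ p.1 - Φt p.2) K Set.univ)
    {V : Set (Fin n → ℂ)} (hv : GaussianDecayOn eSq Φt v V) :
    GaussianDecayOn (fun p => eSq p.1 + eSq p.2) (fun p => Φ p.1) (fun p => K p * v p.2)
      (Set.univ ×ˢ V) := by
  have hv' : GaussianDecayOn (fun p : (Fin n → ℂ) × (Fin n → ℂ) => eSq p.2) (fun p => Φt p.2)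
      (fun p => v p.2) (Set.univ ×ˢ V) := by
    obtain ⟨C, c, hC, hc, h⟩ := hv
    exact ⟨C, c, hC, hc, fun p hp => h p.2 hp.2⟩
  obtain ⟨m, hm, hle⟩ := exists_pos_mul_eSq_add_eSq_le κ
  simpa only [sub_add_cancel] using
    ((hK.mono (Set.subset_univ _)).mul hv' (fun _ => eSq_nonneg _) fun _ => eSq_nonneg _).of_mul_le
      hm fun p _ => hle p.1 p.2

theorem gaussianDecayOn_kernel_mul_of_separated
    (hK : GaussianDecayOn (fun p => eSq (p.1 - κ.symm p.2)) (fun p => Φ p.1 - Φt p.2) K Set.univ)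
    (hv : SubGaussianGrowth eSq Φt v) {δ : ℝ} (hδ : 0 < δ) :
    GaussianDecayOn (fun p => eSq p.1 + eSq p.2) (fun p => Φ p.1) (fun p => K p * v p.2)
      {p | δ * ‖p.1‖ ≤ ‖p.1 - κ.symm p.2‖} := by
  have hv' : SubGaussianGrowth (fun p : (Fin n → ℂ) × (Fin n → ℂ) => eSq p.1 + eSq p.2)
      (fun p => Φt p.2) (fun p => v p.2) := by
    intro ε hε
    obtain ⟨C, hC, h⟩ := hv ε hε
    refine ⟨C, hC, fun p => (h p.2).trans ?_⟩
    gcongr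
    exact le_add_of_nonneg_left (eSq_nonneg p.1)
  obtain ⟨m, hm, hle⟩ := exists_pos_mul_eSq_add_eSq_le_of_separated κ hδ
  have hdecay : GaussianDecayOn (fun p => eSq p.1 + eSq p.2) (fun p => Φ p.1 - Φt p.2) K
      {p | δ * ‖p.1‖ ≤ ‖p.1 - κ.symm p.2‖} :=
    (hK.mono (Set.subset_univ _)).of_mul_le hm fun p => hle p.1 p.2
  simpa only [sub_add_cancel] using hdecay.mul_subGaussianGrowth hv'

theorem GaussianDecayOn.of_enorm_le_lintegral {F : (Fin n → ℂ) × (Fin n → ℂ) → ℂ}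
    {U : Set (Fin n → ℂ)}
    (hF : GaussianDecayOn (fun p => eSq p.1 + eSq p.2) (fun p => Φ p.1) F (U ×ˢ Set.univ))
    (hu : ∀ z, ‖u z‖ₑ ≤ ∫⁻ w, ‖F (z, w)‖ₑ) : GaussianDecayOn eSq Φ u U := by
  obtain ⟨C, c, hC, hc, hF⟩ := hF
  set I := ∫ w : Fin n → ℂ, Real.exp (-(c * eSq w))
  have hI_pos : 0 < I := integral_exp_pos (integrable_exp_neg_mul_eSq hc)
  refine ⟨C * I, c, mul_pos hC hI_pos, hc, fun z hz => ?_⟩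
  set M := C * Real.exp (Φ z - c * eSq z) with hM
  have hpointwise (w : Fin n → ℂ) : ‖F (z, w)‖ ≤ M * Real.exp (-(c * eSq w)) := by
    rw [hM, mul_assoc, ← Real.exp_add]
    exact (hF (z, w) ⟨hz, trivial⟩).trans_eq (by ring_nf)
  have hlintegral : ‖u z‖ₑ ≤ ENNReal.ofReal (M * I) := calc
    ‖u z‖ₑ ≤ ∫⁻ w, ‖F (z, w)‖ₑ := hu z
    _ ≤ ∫⁻ w, ENNReal.ofReal (M * Real.exp (-(c * eSq w))) := lintegral_mono fun w => by
      rw [← ofReal_norm]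
      exact ENNReal.ofReal_le_ofReal (hpointwise w)
    _ = ENNReal.ofReal (M * I) := by
      rw [← ofReal_integral_eq_lintegral_ofReal ((integrable_exp_neg_mul_eSq hc).const_mul M)
        (.of_forall fun w => by positivity), integral_const_mul]
  rw [← ofReal_norm, ENNReal.ofReal_le_ofReal_iff (by positivity)] at hlintegral
  exact hlintegral.trans_eq (by rw [hM]; ring)

theorem mapsTo_wf_of_kernel
    (hK : GaussianDecayOn (fun p => eSq (p.1 - κ.symm p.2)) (fun p => Φ p.1 - Φt p.2) K Set.univ)
    (hv : SubGaussianGrowth eSq Φt v) (hu : ∀ z, ‖u z‖ₑ ≤ ∫⁻ w, ‖K (z, w) * v w‖ₑ) :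
    Set.MapsTo κ (wf Φ u) (wf Φt v) := by
  intro z₀ hz₀
  by_contra hnot
  obtain ⟨V, hVo, hVc, h0, hzV, hvV⟩ := (notMem_wf_iff (by simpa using hz₀.1)).1 hnot
  obtain ⟨U, δ, hUo, hUc, h0U, hzU, hδ, hsep⟩ := exists_open_cone_separated
    (W := κ ⁻¹' V) (hVo.preimage κ.continuous)
    (fun z hz t ht => by simpa only [Set.mem_preimage, map_smul] using hVc _ hz t ht)
    (by simpa using h0) hzV
  have hcover : U ×ˢ Set.univ ⊆
      Set.univ ×ˢ V ∪ {p : (Fin n → ℂ) × (Fin n → ℂ) | δ * ‖p.1‖ ≤ ‖p.1 - κ.symm p.2‖} := by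
    rintro ⟨z, w⟩ ⟨hz, -⟩
    by_cases hw : w ∈ V
    · exact .inl ⟨trivial, hw⟩
    · exact .inr (hsep z hz (κ.symm w) (by simpa using hw))
  have hdecay := ((gaussianDecayOn_kernel_mul_of_decay hK hvV).union
    (gaussianDecayOn_kernel_mul_of_separated hK hv hδ)
    fun p => add_nonneg (eSq_nonneg p.1) (eSq_nonneg p.2)).mono hcover
  exact (notMem_wf_iff hz₀.1).2
    ⟨U, hUo, hUc, h0U, hzU, hdecay.of_enorm_le_lintegral hu⟩ hz₀

-- The lower integral keeps the hypothesis on `u` meaningful when `K` or `v` is not measurable.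
theorem stmt_12_general (hΦ : IsSqHomogeneous Φ) (hΦt : IsSqHomogeneous Φt)
    (hrad : Set.MapsTo κ {z | Φ z - Φt z = 0} {z | Φ z - Φt z = 0})
    (hK : GaussianDecayOn (fun p => eSq (p.1 - κ.symm p.2)) (fun p => Φ p.1 - Φt p.2) K Set.univ)
    (hv : SubGaussianGrowth eSq Φt v) (hu : ∀ z, ‖u z‖ₑ ≤ ∫⁻ w, ‖K (z, w) * v w‖ₑ) :
    wf Φ u ∩ {z | Φ z - Φt z = 0} ⊆ (κ.symm '' wf Φ v) ∩ {z | Φ z - Φt z = 0} := by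
  rintro z ⟨hz, hzrad⟩
  have hκz : κ z ∈ wf Φt v := mapsTo_wf_of_kernel hK hv hu hz
  have hκz' : κ z ∈ wf Φ v := mem_wf_of_eq hΦ hΦt (sub_eq_zero.1 (hrad hzrad)) hκz
  exact ⟨⟨κ z, hκz', κ.symm_apply_apply z⟩, hzrad⟩

end Kernel

/-- The integral kernel of the Bergman-form operator `berg a Ψ Φ` with respect to Lebesgue measure,
as a function of the pair `(z, w)`. -/
def bergKernel (a : ℂ) (Ψ : (Fin n → ℂ) → (Fin n → ℂ) → ℂ) (Φ : (Fin n → ℂ) → ℝ)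
    (p : (Fin n → ℂ) × (Fin n → ℂ)) : ℂ :=
  a * Complex.exp (2 * Ψ p.1 (star p.2)) * (Real.exp (-2 * Φ p.2) : ℂ)

theorem enorm_berg_le_lintegral (a : ℂ) (Ψ : (Fin n → ℂ) → (Fin n → ℂ) → ℂ) (Φ : (Fin n → ℂ) → ℝ)
    (v : (Fin n → ℂ) → ℂ) (z : Fin n → ℂ) :
    ‖berg a Ψ Φ v z‖ₑ ≤ ∫⁻ w, ‖bergKernel a Ψ Φ (z, w) * v w‖ₑ := by
  have hberg : berg a Ψ Φ v z = ∫ w, bergKernel a Ψ Φ (z, w) * v w := by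
    rw [berg, ← integral_const_mul]
    congr 1 with w
    rw [bergKernel]
    ring
  exact hberg ▸ enorm_integral_le_lintegral_enorm _

theorem gaussianDecayOn_bergKernel {Φ Φt : (Fin n → ℂ) → ℝ} {Ψ : (Fin n → ℂ) → (Fin n → ℂ) → ℂ}
    {q : (Fin n → ℂ) × (Fin n → ℂ) → ℝ} {c : ℝ} (hc : 0 < c)
    (hΨ : ∀ z w, 2 * (Ψ z (star w)).re - Φ z - Φt w ≤ -c * q (z, w)) (a : ℂ) :
    GaussianDecayOn q (fun p => Φ p.1 - Φt p.2) (bergKernel a Ψ Φt) Set.univ := by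
  refine ⟨‖a‖ + 1, c, by positivity, hc, fun ⟨z, w⟩ _ => ?_⟩
  calc ‖bergKernel a Ψ Φt (z, w)‖
      = ‖a‖ * Real.exp (2 * (Ψ z (star w)).re + -2 * Φt w) := by
        rw [bergKernel, norm_mul, norm_mul, Complex.norm_exp, Complex.norm_real,
          Real.norm_of_nonneg (Real.exp_pos _).le, mul_assoc, Real.exp_add]
        simp
    _ ≤ (‖a‖ + 1) * Real.exp (Φ z - Φt w - c * q (z, w)) := by
        gcongr
        · exact le_add_of_nonneg_right zero_le_one
        · linarith [hΨ z w]

/-- With `Φ̃ ≤ Φ` strictly plurisubharmonic quadratic forms, `κ♭` an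
`ℝ`-linear isomorphism preserving the radical `Rad(Φ − Φ̃)`, and `Ψ̃` a holomorphic
quadratic form with `2 Re Ψ̃(z,w̄) − Φ(z) − Φ̃(w) ≤ −c|z − (κ♭)⁻¹(w)|²`, the operator
`G̃ v (z) = ã ∫ e^{2Ψ̃(z,w̄)} v(w) e^{-2Φ̃(w)} dL(w)` satisfies
`WF^{1/2}_Φ(G̃v) ∩ Rad(Φ − Φ̃) ⊆ (κ♭)⁻¹(WF^{1/2}_Φ(v)) ∩ Rad(Φ − Φ̃)`. -/
theorem stmt_12 (n : ℕ) (hn : 1 ≤ n) (Φ Φt : (Fin n → ℂ) → ℝ)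
    (hΦ : IsSPSH Φ) (hΦt : IsSPSH Φt) (hle : ∀ z, Φt z ≤ Φ z)
    (κ : (Fin n → ℂ) ≃ₗ[ℝ] (Fin n → ℂ))
    (hrad : (fun w => κ w) '' {z : Fin n → ℂ | Φ z - Φt z = 0}
        = {z : Fin n → ℂ | Φ z - Φt z = 0})
    (at_ : ℂ) (Ψt : (Fin n → ℂ) → (Fin n → ℂ) → ℂ) (hΨt : IsCQuad2 Ψt)
    (c : ℝ) (hc : 0 < c)
    (hest : ∀ z w : Fin n → ℂ,
        2 * (Ψt z (star w)).re - Φ z - Φt w ≤ -c * eSq (z - κ.symm w))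
    (v : (Fin n → ℂ) → ℂ) (hv : Differentiable ℂ v)
    (C₀ N : ℝ) (hC₀ : 0 < C₀)
    (hg : ∀ w : Fin n → ℂ, ‖v w‖ ≤ C₀ * jb w ^ N * Real.exp (Φt w)) :
    wf Φ (berg at_ Ψt Φt v) ∩ {z : Fin n → ℂ | Φ z - Φt z = 0} ⊆
      ((fun w => κ.symm w) '' wf Φ v) ∩ {z : Fin n → ℂ | Φ z - Φt z = 0} := by
  exact stmt_12_general (κ := κ.toContinuousLinearEquiv) hΦ.1.isSqHomogeneous
    hΦt.1.isSqHomogeneous (fun z hz => hrad.subset ⟨z, hz, rfl⟩)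
    (gaussianDecayOn_bergKernel hc hest at_) (subGaussianGrowth_of_norm_le_jb_rpow hC₀ hg)
    (enorm_berg_le_lintegral at_ Ψt Φt v)
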